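/- Let $1 < \alpha < 2$, let $\tau > 0$, set $t_k := k\tau$ and $a_k := \frac{\tau^{2-\alpha}}{2-\alpha}\big[(k+1)^{2-\alpha} - k^{2-\alpha}\big]$ for $k \ge 0$, and let $n \ge 1$. If $g \in C^2[0, t_n]$, then $\Big| \int_0^{t_n} \frac{g'(t)}{(t_n - t)^{\alpha - 1}}\,dt - \frac{1}{\tau}\Big[ a_0\, g(t_n) - \sum_{k=1}^{n-1} (a_{n-k-1} - a_{n-k})\, g(t_k) - a_{n-1}\, g(t_0) \Big] \Big| \le \frac{1}{2-\alpha}\Big[ \frac{2-\alpha}{12} + \frac{2^{3-\alpha}}{3-\alpha} - (1 + 2^{1-\alpha}) \Big] \max_{0 \le t \le t_n} |g''(t)| \; \tau^{3-\alpha}$. -/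

import Mathlib

/-!
The substitution `t = t_n - τ u` turns the integral into `τ ^ (2 - α) ∫₀ⁿ f(u) u ^ (1 - α) du` with
`f(u) = g'(t_n - τ u)`, and summation by parts turns the quadrature formula into the same integral
with `f` replaced by its mean over each cell `[j, j + 1]`. The error on a cell is therefore the
covariance of `f` and the decreasing weight `u ^ (1 - α)`. By Chebyshev's integral inequality,
among functions with a given Lipschitz constant this covariance is extremal for the linear ones, so
the error constant is a sum over `j` of covariances of `-u` and `u ^ (1 - α)`. The cells `j = 0, 1`
are computed explicitly; for `j ≥ 2`, convexity of the weight bounds the covariance by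
`((j - 1) ^ (1 - α) - j ^ (1 - α)) / 12`, and these bounds telescope to at most `1 / 12`.
-/

open MeasureTheory Set
open scoped NNReal

section Covariance

theorem integral_mul_integral_le_of_monovaryOn {Ω : Type*} [MeasurableSpace Ω] {μ : Measure Ω}
    [IsFiniteMeasure μ] {f w : Ω → ℝ} {s : Set Ω} (hs : ∀ᵐ x ∂μ, x ∈ s) (h : MonovaryOn f w s)
    (hf : Integrable f μ) (hw : Integrable w μ) (hfw : Integrable (fun x => f x * w x) μ) :
    (∫ x, f x ∂μ) * ∫ x, w x ∂μ ≤ μ.real univ * ∫ x, f x * w x ∂μ := by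
  have inner_le : ∀ᵐ x ∂μ, f x * (∫ y, w y ∂μ) + w x * (∫ y, f y ∂μ) ≤
      μ.real univ * (f x * w x) + ∫ y, f y * w y ∂μ := by
    filter_upwards [hs] with x hx
    have rearrangement : ∀ᵐ y ∂μ, f x * w y + w x * f y ≤ f x * w x + f y * w y := by
      filter_upwards [hs] with y hy
      linarith [h.mul_add_mul_le_mul_add_mul hx hy]
    have := integral_mono_ae ((hw.const_mul (f x)).add (hf.const_mul (w x)))
      ((integrable_const (f x * w x)).add hfw) rearrangement
    simp only [Pi.add_apply, integral_add (hw.const_mul (f x)) (hf.const_mul (w x)),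
      integral_add (integrable_const (f x * w x)) hfw, integral_const_mul, integral_const,
      smul_eq_mul] at this
    linarith
  have := integral_mono_ae ((hf.mul_const _).add (hw.mul_const _))
    ((hfw.const_mul _).add (integrable_const _)) inner_le
  simp only [Pi.add_apply, integral_add (hf.mul_const _) (hw.mul_const _),
    integral_add (hfw.const_mul _) (integrable_const _), integral_const_mul, integral_mul_const,
    integral_const, smul_eq_mul] at this
  linarith

/-- The covariance of `f` and `w` on `[a, b]` with respect to Lebesgue measure, not divided by the
length `b - a`: the error made in `∫ f w` when `f` is replaced by its mean value. -/
noncomputable def intervalCov (f w : ℝ → ℝ) (a b : ℝ) : ℝ :=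
  (∫ x in a..b, f x * w x) - (∫ x in a..b, f x) * (∫ x in a..b, w x) / (b - a)

variable {f g w : ℝ → ℝ} {a b : ℝ}

theorem intervalCov_comm (f w : ℝ → ℝ) (a b : ℝ) : intervalCov f w a b = intervalCov w f a b := by
  simp only [intervalCov, mul_comm]

theorem intervalCov_neg_left (f w : ℝ → ℝ) (a b : ℝ) :
    intervalCov (fun x => -f x) w a b = -intervalCov f w a b := by
  simp only [intervalCov, neg_mul, intervalIntegral.integral_neg]
  ring

theorem intervalCov_const_mul_add_left (c : ℝ) (hf : IntervalIntegrable f volume a b)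
    (hg : IntervalIntegrable g volume a b)
    (hfw : IntervalIntegrable (fun x => f x * w x) volume a b)
    (hgw : IntervalIntegrable (fun x => g x * w x) volume a b) :
    intervalCov (fun x => c * f x + g x) w a b = c * intervalCov f w a b + intervalCov g w a b := by
  simp only [intervalCov, add_mul, mul_assoc]
  rw [intervalIntegral.integral_add (hfw.const_mul c) hgw,
    intervalIntegral.integral_add (hf.const_mul c) hg, intervalIntegral.integral_const_mul,
    intervalIntegral.integral_const_mul]
  ring

theorem intervalCov_id_id (hab : a ≠ b) : intervalCov id id a b = (b - a) ^ 3 / 12 := by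
  have hba : b - a ≠ 0 := sub_ne_zero.2 hab.symm
  simp only [intervalCov, id, ← sq, integral_pow, integral_id]
  field_simp
  ring

theorem intervalCov_nonneg_of_monovaryOn (hab : a < b) (h : MonovaryOn f w (Ioo a b))
    (hf : IntervalIntegrable f volume a b) (hw : IntervalIntegrable w volume a b)
    (hfw : IntervalIntegrable (fun x => f x * w x) volume a b) : 0 ≤ intervalCov f w a b := by
  have hvol : (volume.restrict (Ioo a b)).real univ = b - a := by
    simp [hab.le]
  have chebyshev := integral_mul_integral_le_of_monovaryOn (ae_restrict_mem measurableSet_Ioo) h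
    ((intervalIntegrable_iff_integrableOn_Ioo_of_le hab.le).1 hf)
    ((intervalIntegrable_iff_integrableOn_Ioo_of_le hab.le).1 hw)
    ((intervalIntegrable_iff_integrableOn_Ioo_of_le hab.le).1 hfw)
  simp only [hvol, ← integral_Ioc_eq_integral_Ioo, ← intervalIntegral.integral_of_le hab.le]
    at chebyshev
  rw [intervalCov, sub_nonneg, div_le_iff₀' (sub_pos.2 hab)]
  exact chebyshev

theorem neg_le_intervalCov_of_lipschitzOnWith {L : ℝ≥0} (hab : a < b)
    (hf : LipschitzOnWith L f (Icc a b)) (hw : AntitoneOn w (Ioo a b))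
    (hwi : IntervalIntegrable w volume a b) :
    -(L * intervalCov (fun x => -x) w a b) ≤ intervalCov f w a b := by
  have hfc : ContinuousOn f (uIcc a b) := uIcc_of_le hab.le ▸ hf.continuousOn
  have hneg : ContinuousOn (fun x : ℝ => -x) (uIcc a b) := continuousOn_neg
  have antitone : AntitoneOn (fun x => L * -x + f x) (Ioo a b) := by
    intro x hx y hy hxy
    have := hf.dist_le_mul y (Ioo_subset_Icc_self hy) x (Ioo_subset_Icc_self hx)
    rw [Real.dist_eq, Real.dist_eq, abs_of_nonneg (sub_nonneg.2 hxy)] at this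
    linarith [le_of_abs_le this]
  have hlin : ContinuousOn (fun x => L * -x + f x) (uIcc a b) :=
    (continuousOn_const.mul hneg).add hfc
  have nonneg := intervalCov_nonneg_of_monovaryOn hab (antitone.monovaryOn hw)
    hlin.intervalIntegrable hwi (hwi.continuousOn_mul hlin)
  rw [intervalCov_const_mul_add_left _ hneg.intervalIntegrable hfc.intervalIntegrable
    (hwi.continuousOn_mul hneg) (hwi.continuousOn_mul hfc)] at nonneg
  linarith

theorem abs_intervalCov_le_of_lipschitzOnWith {L : ℝ≥0} (hab : a < b)
    (hf : LipschitzOnWith L f (Icc a b)) (hw : AntitoneOn w (Ioo a b))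
    (hwi : IntervalIntegrable w volume a b) :
    |intervalCov f w a b| ≤ L * intervalCov (fun x => -x) w a b := by
  have upper : -(L * intervalCov (fun x => -x) w a b) ≤ -intervalCov f w a b :=
    intervalCov_neg_left f w a b ▸ neg_le_intervalCov_of_lipschitzOnWith hab hf.neg hw hwi
  exact abs_le.2 ⟨neg_le_intervalCov_of_lipschitzOnWith hab hf hw hwi, neg_le_neg_iff.1 upper⟩

theorem intervalCov_neg_id_le_of_convexOn {φ : ℝ → ℝ} {c : ℝ} (hca : c < a) (hab : a < b)
    (hφ : ConvexOn ℝ (Icc c b) φ) (hφi : IntervalIntegrable φ volume a b) :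
    intervalCov (fun x => -x) φ a b ≤ (φ c - φ a) / (a - c) * ((b - a) ^ 3 / 12) := by
  set D := (φ c - φ a) / (a - c) with hD
  have monotone : MonotoneOn (fun x => D * id x + φ x) (Ioo a b) := by
    intro x hx y hy hxy
    rcases hxy.eq_or_lt with rfl | hxy
    · exact le_rfl
    have slope_le : -D ≤ (φ y - φ x) / (y - x) := calc
      -D = (φ a - φ c) / (a - c) := by rw [hD, ← neg_div, neg_sub]
      _ ≤ (φ x - φ a) / (x - a) :=
        hφ.slope_mono_adjacent ⟨le_rfl, (hca.trans hab).le⟩ ⟨(hca.trans hx.1).le, hx.2.le⟩ hca hx.1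
      _ ≤ (φ y - φ x) / (y - x) :=
        hφ.slope_mono_adjacent ⟨hca.le, hab.le⟩ ⟨(hca.trans hy.1).le, hy.2.le⟩ hx.1 hxy
    rw [le_div_iff₀ (sub_pos.2 hxy)] at slope_le
    simp only [id]
    linarith
  have hid : IntervalIntegrable id volume a b := continuous_id.intervalIntegrable a b
  have hφid : IntervalIntegrable (fun x => φ x * id x) volume a b :=
    hφi.mul_continuousOn continuousOn_id
  have hidid : IntervalIntegrable (fun x : ℝ => id x * id x) volume a b :=
    hid.mul_continuousOn continuousOn_id
  have hsum := (hid.const_mul D).add hφi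
  have nonneg := intervalCov_nonneg_of_monovaryOn hab (monotone.monovaryOn monotoneOn_id)
    hsum hid (hsum.mul_continuousOn continuousOn_id)
  rw [intervalCov_const_mul_add_left _ hid hφi hidid hφid, intervalCov_id_id hab.ne,
    intervalCov_comm φ] at nonneg
  have hneg : intervalCov (fun x => -x) φ a b = -intervalCov id φ a b :=
    intervalCov_neg_left id φ a b
  linarith

end Covariance

section PowerWeight

variable {r : ℝ}

theorem convexOn_rpow_of_nonpos (hr : r ≤ 0) : ConvexOn ℝ (Ioi 0) fun x : ℝ => x ^ r := by
  have hderiv : ∀ x ∈ Ioi (0 : ℝ), HasDerivAt (fun x : ℝ => x ^ r) (r * x ^ (r - 1)) x :=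
    fun x hx => Real.hasDerivAt_rpow_const (Or.inl (ne_of_gt hx))
  refine MonotoneOn.convexOn_of_deriv (convex_Ioi 0) (HasDerivAt.continuousOn hderiv) ?_ ?_
  · rw [interior_Ioi]
    exact fun x hx => (hderiv x hx).differentiableAt.differentiableWithinAt
  · rw [interior_Ioi]
    intro x hx y hy hxy
    rw [(hderiv x hx).deriv, (hderiv y hy).deriv]
    exact mul_le_mul_of_nonpos_left (Real.rpow_le_rpow_of_nonpos hx hxy (by linarith)) hr

theorem antitoneOn_rpow_Ioo (hr : r ≤ 0) {a b : ℝ} (ha : 0 ≤ a) :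
    AntitoneOn (fun x : ℝ => x ^ r) (Ioo a b) :=
  fun _ hx _ _ hxy => Real.rpow_le_rpow_of_nonpos (ha.trans_lt hx.1) hxy hr

/-- The error constant of the cell `[j, j + 1]`: the covariance of `-u` and the weight `u ^ r`. The
sign makes it nonnegative for a decreasing weight. -/
noncomputable def cellConst (r j : ℝ) : ℝ :=
  intervalCov (fun u => -u) (fun u => u ^ r) j (j + 1)

theorem cellConst_nonneg (hr : -1 < r) (hr0 : r ≤ 0) {j : ℝ} (hj : 0 ≤ j) : 0 ≤ cellConst r j := by
  have hneg : Continuous fun u : ℝ => -u := continuous_neg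
  have hw : IntervalIntegrable (fun u : ℝ => u ^ r) volume j (j + 1) :=
    intervalIntegral.intervalIntegrable_rpow' hr
  exact intervalCov_nonneg_of_monovaryOn (lt_add_one j)
    (AntitoneOn.monovaryOn (fun _ _ _ _ h => neg_le_neg h) (antitoneOn_rpow_Ioo hr0 hj))
    (hneg.intervalIntegrable _ _) hw (hw.continuousOn_mul hneg.continuousOn)

theorem cellConst_le (hr : -1 < r) (hr0 : r ≤ 0) {j : ℝ} (hj : 1 < j) :
    cellConst r j ≤ ((j - 1) ^ r - j ^ r) / 12 := by
  have hconvex : ConvexOn ℝ (Icc (j - 1) (j + 1)) fun u : ℝ => u ^ r :=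
    (convexOn_rpow_of_nonpos hr0).subset (fun u hu => (sub_pos.2 hj).trans_le hu.1)
      (convex_Icc _ _)
  refine (intervalCov_neg_id_le_of_convexOn (sub_one_lt j) (lt_add_one j) hconvex
    (intervalIntegral.intervalIntegrable_rpow' hr)).trans_eq ?_
  ring

theorem sum_cellConst_le (hr : -1 < r) (hr0 : r ≤ 0) (n : ℕ) :
    ∑ j ∈ Finset.range n, cellConst r j ≤ cellConst r 0 + cellConst r 1 + 1 / 12 := by
  have tail : ∑ j ∈ Finset.range n, cellConst r (j + 2 : ℕ) ≤ 1 / 12 := calc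
    ∑ j ∈ Finset.range n, cellConst r (j + 2 : ℕ)
      ≤ ∑ j ∈ Finset.range n, (((j + 1 : ℕ) : ℝ) ^ r / 12 - ((j + 1 + 1 : ℕ) : ℝ) ^ r / 12) := by
        refine Finset.sum_le_sum fun j _ => (cellConst_le hr hr0 ?_).trans_eq ?_
        · exact_mod_cast (by omega : 1 < j + 2)
        · push_cast
          ring_nf
    _ = 1 / 12 - ((n + 1 : ℕ) : ℝ) ^ r / 12 := by
        rw [Finset.sum_range_sub' fun j : ℕ => ((j + 1 : ℕ) : ℝ) ^ r / 12]
        simp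
    _ ≤ 1 / 12 := sub_le_self _ (by positivity)
  calc ∑ j ∈ Finset.range n, cellConst r j
      ≤ ∑ j ∈ Finset.range (n + 2), cellConst r j :=
        Finset.sum_le_sum_of_subset_of_nonneg (Finset.range_mono (Nat.le_add_right n 2))
          fun j _ _ => cellConst_nonneg hr hr0 j.cast_nonneg
    _ = (∑ j ∈ Finset.range n, cellConst r (j + 2 : ℕ)) + cellConst r 1 + cellConst r 0 := by
        rw [Finset.sum_range_succ', Finset.sum_range_succ']
        simp [add_assoc, one_add_one_eq_two]
    _ ≤ cellConst r 0 + cellConst r 1 + 1 / 12 := by linarith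

theorem cellConst_eq (hr : -1 < r) {j : ℝ} (hj : 0 ≤ j) :
    cellConst r j = (j + 1 / 2) * (((j + 1) ^ (r + 1) - j ^ (r + 1)) / (r + 1)) -
      ((j + 1) ^ (r + 2) - j ^ (r + 2)) / (r + 2) := by
  have hmul : ∫ u in j..(j + 1), -u * u ^ r = -∫ u in j..(j + 1), u ^ (r + 1) := by
    rw [← intervalIntegral.integral_neg]
    refine intervalIntegral.integral_congr fun u hu => ?_
    rw [uIcc_of_le (lt_add_one j).le] at hu
    rw [Real.rpow_add_one' (hj.trans hu.1) (by linarith)]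
    ring
  rw [cellConst, intervalCov, hmul, integral_rpow (Or.inl hr), integral_rpow (Or.inl (by linarith)),
    intervalIntegral.integral_neg, integral_id, add_sub_cancel_left, add_assoc r 1 1,
    one_add_one_eq_two]
  ring

theorem cellConst_zero_add_cellConst_one (hr : -1 < r) :
    cellConst r 0 + cellConst r 1 + 1 / 12 =
      1 / (r + 1) * ((r + 1) / 12 + (2 : ℝ) ^ (r + 2) / (r + 2) - (1 + (2 : ℝ) ^ r)) := by
  have hr1 : r + 1 ≠ 0 := by linarith
  have hr2 : r + 2 ≠ 0 := by linarith
  rw [cellConst_eq hr le_rfl, cellConst_eq hr zero_le_one]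
  norm_num [Real.zero_rpow hr1, Real.zero_rpow hr2, Real.rpow_add]
  field_simp
  ring

theorem abs_integral_mul_rpow_sub_sum_le (hr : -1 < r) (hr0 : r ≤ 0) {f : ℝ → ℝ} {L : ℝ≥0} {n : ℕ}
    (hf : LipschitzOnWith L f (Icc 0 n)) :
    |(∫ u in (0 : ℝ)..n, f u * u ^ r) -
        ∑ j ∈ Finset.range n, (∫ u in (j : ℝ)..(j + 1), f u) * ∫ u in (j : ℝ)..(j + 1), u ^ r| ≤
      L * (cellConst r 0 + cellConst r 1 + 1 / 12) := by
  have hcell : ∀ j < n, LipschitzOnWith L f (Icc (j : ℝ) (j + 1)) := fun j hj =>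
    hf.mono (Icc_subset_Icc j.cast_nonneg (by exact_mod_cast hj))
  have hw (j : ℕ) : IntervalIntegrable (fun u : ℝ => u ^ r) volume j (j + 1) :=
    intervalIntegral.intervalIntegrable_rpow' hr
  have hsplit : ∑ j ∈ Finset.range n, ∫ u in (j : ℝ)..(j + 1), f u * u ^ r =
      ∫ u in (0 : ℝ)..n, f u * u ^ r := by
    have := intervalIntegral.sum_integral_adjacent_intervals (a := fun j : ℕ => (j : ℝ)) (n := n)
      (f := fun u => f u * u ^ r) (μ := volume) fun j hj => by
        push_cast
        exact (hw j).continuousOn_mul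
          (uIcc_of_le (lt_add_one (j : ℝ)).le ▸ (hcell j hj).continuousOn)
    simpa using this
  rw [← hsplit, ← Finset.sum_sub_distrib]
  calc |∑ j ∈ Finset.range n, ((∫ u in (j : ℝ)..(j + 1), f u * u ^ r) -
          (∫ u in (j : ℝ)..(j + 1), f u) * ∫ u in (j : ℝ)..(j + 1), u ^ r)|
      = |∑ j ∈ Finset.range n, intervalCov f (fun u => u ^ r) j (j + 1)| := by
        simp only [intervalCov, add_sub_cancel_left, div_one]
    _ ≤ ∑ j ∈ Finset.range n, L * cellConst r j :=
        (Finset.abs_sum_le_sum_abs _ _).trans <| Finset.sum_le_sum fun j hj =>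
          abs_intervalCov_le_of_lipschitzOnWith (lt_add_one _) (hcell j (Finset.mem_range.1 hj))
            (antitoneOn_rpow_Ioo hr0 j.cast_nonneg) (hw j)
    _ ≤ L * (cellConst r 0 + cellConst r 1 + 1 / 12) := by
        rw [← Finset.mul_sum]
        exact mul_le_mul_of_nonneg_left (sum_cellConst_le hr hr0 n) L.coe_nonneg

end PowerWeight

theorem sum_range_mul_sub_eq_sub_sum_Icc (a G : ℕ → ℝ) (m : ℕ) :
    ∑ j ∈ Finset.range (m + 1), a j * (G (m + 1 - j) - G (m - j)) =
      a 0 * G (m + 1) - (∑ k ∈ Finset.Icc 1 m, (a (m + 1 - k - 1) - a (m + 1 - k)) * G k) -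
        a m * G 0 := by
  have hreflect : ∑ k ∈ Finset.Icc 1 m, (a (m + 1 - k - 1) - a (m + 1 - k)) * G k =
      ∑ j ∈ Finset.range m, (a j - a (j + 1)) * G (m - j) := by
    refine Finset.sum_nbij' (m - ·) (m - ·) ?_ ?_ ?_ ?_ fun k hk => ?_
    · grind
    · grind
    · grind
    · grind
    · obtain ⟨_, hkm⟩ := Finset.mem_Icc.1 hk
      rw [Nat.sub_sub_self hkm, Nat.sub_add_comm hkm, Nat.add_sub_cancel]
  rw [hreflect]
  simp only [mul_sub, sub_mul, Finset.sum_sub_distrib]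
  rw [Finset.sum_range_succ', Finset.sum_range_succ (fun j => a j * G (m - j))]
  simp only [Nat.add_sub_add_right, Nat.sub_zero, Nat.sub_self]
  ring

theorem integral_div_rpow_eq_mul_integral {τ T α : ℝ} (hτ : 0 < τ) (hT : 0 ≤ T) (h : ℝ → ℝ) :
    ∫ s in (0 : ℝ)..T * τ, h s / (T * τ - s) ^ (α - 1) =
      τ ^ (2 - α) * ∫ u in (0 : ℝ)..T, h (T * τ - τ * u) * u ^ (1 - α) := by
  have hsubst := intervalIntegral.integral_comp_sub_mul (a := 0) (b := T)
    (fun s => h s / (T * τ - s) ^ (α - 1)) hτ.ne' (T * τ)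
  rw [mul_comm τ T, sub_self, mul_zero, sub_zero, smul_eq_mul, eq_inv_mul_iff_mul_eq₀ hτ.ne']
    at hsubst
  rw [← hsubst, ← intervalIntegral.integral_const_mul, ← intervalIntegral.integral_const_mul]
  refine intervalIntegral.integral_congr fun u hu => ?_
  rw [uIcc_of_le hT] at hu
  simp only [sub_sub_cancel]
  rw [Real.mul_rpow hτ.le hu.1, ← neg_sub α 1, Real.rpow_neg hu.1,
    show 2 - α = 1 - (α - 1) by ring, Real.rpow_sub hτ 1, Real.rpow_one]
  ring

theorem rpow_mul_integral_rpow {τ α : ℝ} (hα : α < 2) (j : ℝ) :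
    τ ^ (2 - α) * ∫ u in j..(j + 1), u ^ (1 - α) =
      τ ^ (2 - α) / (2 - α) * ((j + 1) ^ (2 - α) - j ^ (2 - α)) := by
  rw [integral_rpow (Or.inl (by linarith)), show 1 - α + 1 = 2 - α by ring]
  ring

theorem integral_comp_sub_mul_eq_of_hasDerivWithinAt {g g' : ℝ → ℝ} {a b c d x y : ℝ} (hc : 0 < c)
    (hg : ∀ s ∈ Icc a b, HasDerivWithinAt g (g' s) (Icc a b) s) (hg' : ContinuousOn g' (Icc a b))
    (hxy : x ≤ y) (hx : d - c * x ≤ b) (hy : a ≤ d - c * y) :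
    ∫ u in x..y, g' (d - c * u) = (g (d - c * x) - g (d - c * y)) / c := by
  have hle : d - c * y ≤ d - c * x := by gcongr
  have hsub : Icc (d - c * y) (d - c * x) ⊆ Icc a b := Icc_subset_Icc hy hx
  rw [intervalIntegral.integral_comp_sub_mul _ hc.ne',
    intervalIntegral.integral_eq_sub_of_hasDerivAt_of_le hle
      (fun s hs => (hg s (hsub hs)).continuousWithinAt.mono hsub)
      (fun s hs => (hg s (hsub (Ioo_subset_Icc_self hs))).hasDerivAt
        (Icc_mem_nhds (hy.trans_lt hs.1) (hs.2.trans_le hx)))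
      ((hg'.mono hsub).intervalIntegrable_of_Icc hle), smul_eq_mul]
  ring

theorem lipschitzOnWith_iSup_abs_of_hasDerivAt {f f' : ℝ → ℝ} {a b : ℝ}
    (hf : ∀ s ∈ Icc a b, HasDerivAt f (f' s) s) (hf' : ContinuousOn f' (Icc a b)) :
    LipschitzOnWith ⟨⨆ s : Icc a b, |f' s|, Real.iSup_nonneg fun _ => abs_nonneg _⟩ f
      (Icc a b) := by
  have hbdd : BddAbove (range fun s : Icc a b => |f' s|) := by
    rw [← image_eq_range (fun s => |f' s|)]
    exact isCompact_Icc.bddAbove_image hf'.abs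
  exact (convex_Icc a b).lipschitzOnWith_of_nnnorm_hasDerivWithin_le
    (fun s hs => (hf s hs).hasDerivWithinAt) fun s hs => le_ciSup hbdd ⟨s, hs⟩

theorem quadrature_eq_sum_integral_mul_integral {α τ : ℝ} (hα2 : α < 2) (hτ : 0 < τ)
    {t a : ℕ → ℝ} (ht : ∀ k : ℕ, t k = (k : ℝ) * τ)
    (ha : ∀ k : ℕ, a k = τ ^ (2 - α) / (2 - α) * (((k : ℝ) + 1) ^ (2 - α) - (k : ℝ) ^ (2 - α)))
    {n : ℕ} (hn : 1 ≤ n) {g g' : ℝ → ℝ}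
    (hg : ∀ s ∈ Icc (0 : ℝ) (t n), HasDerivWithinAt g (g' s) (Icc 0 (t n)) s)
    (hg' : ContinuousOn g' (Icc 0 (t n))) :
    (1 / τ) * (a 0 * g (t n) -
        (∑ k ∈ Finset.Icc 1 (n - 1), (a (n - k - 1) - a (n - k)) * g (t k)) -
        a (n - 1) * g (t 0)) =
      τ ^ (2 - α) * ∑ j ∈ Finset.range n,
        (∫ u in (j : ℝ)..(j + 1), g' (t n - τ * u)) * ∫ u in (j : ℝ)..(j + 1), u ^ (1 - α) := by
  obtain ⟨m, rfl⟩ := Nat.exists_eq_add_of_le' hn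
  rw [Nat.add_sub_cancel, ← sum_range_mul_sub_eq_sub_sum_Icc a (fun k => g (t k)) m,
    Finset.mul_sum, Finset.mul_sum]
  refine Finset.sum_congr rfl fun j hj => ?_
  have hjm : j ≤ m := Finset.mem_range_succ_iff.1 hj
  have hleft : t (m + 1) - τ * j = t (m + 1 - j) := by
    rw [ht, ht, Nat.cast_sub (hjm.trans m.le_succ)]
    ring
  have hright : t (m + 1) - τ * (j + 1) = t (m - j) := by
    rw [ht, ht, Nat.cast_sub hjm]
    push_cast
    ring
  have hweight := (rpow_mul_integral_rpow (τ := τ) hα2 j).trans (ha j).symm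
  rw [integral_comp_sub_mul_eq_of_hasDerivWithinAt hτ hg hg' (lt_add_one (j : ℝ)).le
      (sub_le_self _ (by positivity)) (by rw [hright, ht]; positivity),
    hleft, hright, ← hweight]
  ring

theorem stmt_0_general (α τ : ℝ) (hα1 : 1 ≤ α) (hα2 : α < 2) (hτ : 0 < τ)
    (t : ℕ → ℝ) (ht : ∀ k : ℕ, t k = (k : ℝ) * τ)
    (a : ℕ → ℝ)
    (ha : ∀ k : ℕ, a k = τ ^ (2 - α) / (2 - α) * (((k : ℝ) + 1) ^ (2 - α) - (k : ℝ) ^ (2 - α)))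
    (n : ℕ) (hn : 1 ≤ n)
    (g g' : ℝ → ℝ) (L : ℝ≥0)
    (hg : ∀ s ∈ Icc (0 : ℝ) (t n), HasDerivWithinAt g (g' s) (Icc 0 (t n)) s)
    (hg' : LipschitzOnWith L g' (Icc 0 (t n))) :
    |(∫ s in (0 : ℝ)..(t n), g' s / (t n - s) ^ (α - 1)) -
        (1 / τ) * (a 0 * g (t n) -
          (∑ k ∈ Finset.Icc 1 (n - 1), (a (n - k - 1) - a (n - k)) * g (t k)) -
          a (n - 1) * g (t 0))| ≤
      (1 / (2 - α)) * ((2 - α) / 12 + (2 : ℝ) ^ (3 - α) / (3 - α) - (1 + (2 : ℝ) ^ (1 - α))) *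
        L * τ ^ (3 - α) := by
  have hlip : LipschitzOnWith (L * τ.toNNReal) (fun u => g' (t n - τ * u)) (Icc 0 n) := by
    refine hg'.comp (LipschitzOnWith.of_dist_le_mul fun u _ v _ => ?_) fun u hu => ?_
    · rw [Real.coe_toNNReal τ hτ.le, dist_sub_left, Real.dist_eq, Real.dist_eq, ← mul_sub, abs_mul,
        abs_of_pos hτ]
    · rw [ht]
      constructor <;> nlinarith [hu.1, hu.2]
  have hrescaled := abs_integral_mul_rpow_sub_sum_le (by linarith : -1 < 1 - α) (by linarith) hlip
  rw [cellConst_zero_add_cellConst_one (by linarith), show 1 - α + 1 = 2 - α by ring,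
    show 1 - α + 2 = 3 - α by ring, NNReal.coe_mul, Real.coe_toNNReal τ hτ.le] at hrescaled
  have hsubst := integral_div_rpow_eq_mul_integral (α := α) hτ n.cast_nonneg g'
  rw [← ht] at hsubst
  rw [quadrature_eq_sum_integral_mul_integral hα2 hτ ht ha hn hg hg'.continuousOn, hsubst,
    ← mul_sub, abs_mul, abs_of_pos (Real.rpow_pos_of_pos hτ _), show 3 - α = 2 - α + 1 by ring,
    Real.rpow_add_one hτ.ne']
  refine (mul_le_mul_of_nonneg_left hrescaled (Real.rpow_nonneg hτ.le _)).trans_eq ?_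
  ring_nf

/-- Lemma 1 (quadrature error for the weakly singular integral):
for `1 < α < 2`, `τ > 0`, `t k = k τ`,
`a k = τ^(2-α)/(2-α) * ((k+1)^(2-α) - k^(2-α))`, `n ≥ 1`, and `g ∈ C²[0, t n]`,
the discretization error is bounded by
`(1/(2-α)) * ((2-α)/12 + 2^(3-α)/(3-α) - (1 + 2^(1-α))) * max |g''| * τ^(3-α)`. -/
theorem stmt_0 (α τ : ℝ) (hα1 : 1 < α) (hα2 : α < 2) (hτ : 0 < τ)
    (t : ℕ → ℝ) (ht : ∀ k : ℕ, t k = (k : ℝ) * τ)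
    (a : ℕ → ℝ)
    (ha : ∀ k : ℕ, a k = τ ^ (2 - α) / (2 - α) * (((k : ℝ) + 1) ^ (2 - α) - (k : ℝ) ^ (2 - α)))
    (n : ℕ) (hn : 1 ≤ n)
    (g g' g'' : ℝ → ℝ)
    (hg : ∀ s ∈ Set.Icc (0 : ℝ) (t n), HasDerivAt g (g' s) s)
    (hg' : ∀ s ∈ Set.Icc (0 : ℝ) (t n), HasDerivAt g' (g'' s) s)
    (hg'' : ContinuousOn g'' (Set.Icc (0 : ℝ) (t n))) :
    |(∫ s in (0 : ℝ)..(t n), g' s / (t n - s) ^ (α - 1)) -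
        (1 / τ) * (a 0 * g (t n) -
          (∑ k ∈ Finset.Icc 1 (n - 1), (a (n - k - 1) - a (n - k)) * g (t k)) -
          a (n - 1) * g (t 0))| ≤
      (1 / (2 - α)) * ((2 - α) / 12 + (2 : ℝ) ^ (3 - α) / (3 - α) - (1 + (2 : ℝ) ^ (1 - α))) *
        (⨆ s : Set.Icc (0 : ℝ) (t n), |g'' (s : ℝ)|) * τ ^ (3 - α) :=
  stmt_0_general α τ hα1.le hα2 hτ t ht a ha n hn g g' _
    (fun s hs => (hg s hs).hasDerivWithinAt) (lipschitzOnWith_iSup_abs_of_hasDerivAt hg' hg'')
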